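/- Let Γ be a countably infinite sofic group with sofic approximation Σ, and let π : X → Y be a finite-to-one measurable factor map between probability measure preserving actions Γ ↷ (X,μ) and Γ ↷ (Y,ν) (ν = π_*μ). Then h^Σ_Γ(X,μ) ≤ h^Σ_Γ(Y,ν). -/

import Mathlib

/-!
The number of `B`-labelings coming from microstates for `X` is compared with the number of
labelings coming from microstates for `Y`, for a suitable partition of `Y`.

For a window `F₀ ⊆ Γ`, the `F₀`-name of `x` is the pattern of `B`-labels of `g • x`, `g ∈ F₀`.
Disintegrating `μ` over `ν`, the set of `F₀`-names charged by the conditional measure at `y` has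
at most as many elements as the fibre over `y`, whatever `F₀` is. Outside a set of measure `ε` it
therefore has at most `N` elements, with `N` independent of `F₀` (`exists_name_lists`). As `Γ` is
infinite, `F₀` can be chosen afterwards with `log N / |F₀|` as small as desired; `Y` is then
partitioned according to this list of at most `N` names.

A microstate for the join of `B` with the lift of a refinement `A'` of that partition yields a
microstate for `A'` (`Microstates.comp_mem`), hence a list at each `k`, and for most `k` the
pattern `g ↦ b (σ g k)`, `g ∈ F₀`, of the induced `B`-labeling `b` belongs to the list
(`Microstates.card_pattern_le`). Once the lists are given, few `b` are possible
(`card_labelings_le`): fix the small set `S` of exceptional `k`; a greedy choice produces at most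
`d / t` windows based outside `S` that cover nearly everything, where `1 ≪ t ≪ |F₀|`; each window
offers at most `N` patterns, and the uncovered points are labelled arbitrarily. Here the asymptotic
freeness of the sofic approximation ensures that most windows have `|F₀|` distinct points. So there
are at most `exp (4 η d)` labelings `b` over each `Y`-labeling, with `η` arbitrarily small.
-/

open Filter MeasureTheory
open scoped Classical

/-- A sofic approximation of `Γ`: a sequence of maps `σ i : Γ → Sym(d i)` with `d i → ∞`
which is asymptotically multiplicative and asymptotically free. -/
def IsSoficApprox {Γ : Type*} [Group Γ] (d : ℕ → ℕ) (σ : ∀ i, Γ → Equiv.Perm (Fin (d i))) :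
    Prop :=
  Tendsto d atTop atTop ∧
  (∀ g h : Γ, Tendsto (fun i =>
      ((Finset.univ.filter fun k : Fin (d i) => σ i (g * h) k = σ i g (σ i h k)).card : ℝ) / d i)
    atTop (nhds 1)) ∧
  (∀ g : Γ, g ≠ 1 → Tendsto (fun i =>
      ((Finset.univ.filter fun k : Fin (d i) => σ i g k = k).card : ℝ) / d i) atTop (nhds 0))

/-- `log n / d` as an extended real, with value `⊥` when `n = 0`. -/
noncomputable def elogd (n : ℕ) (d : ℕ) : EReal :=
  if n = 0 then ⊥ else ((Real.log n / d : ℝ) : EReal)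

/-- A partition of `X`: every point lies in exactly one piece. -/
def IsPartition {X ι : Type*} (A : ι → Set X) : Prop :=
  ∀ x : X, ∃! i : ι, x ∈ A i

/-- The measure of the atom `⋂_{g ∈ F} g⁻¹ A_{j(g)}` of the join partition `α^F`. -/
noncomputable def atomMass {Γ X : Type*} [Group Γ] [amb : MeasurableSpace X] [MulAction Γ X]
    (μ : Measure X) (F : Finset Γ) {m : ℕ} (A : Fin m → Set X) (j : F → Fin m) : ℝ :=
  (μ (⋂ g : F, (fun x => (g : Γ) • x) ⁻¹' A (j g))).toReal

/-- Microstates (good models) for the finite partition `A`, the finite set `F ⊆ Γ` and the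
tolerance `δ`, with respect to a map `σ : Γ → Sym(d)`: labelings `c : {1,…,d} → {1,…,m}`
whose empirical distribution of `F`-patterns is `δ`-close in total variation to the
distribution of the atoms of the join `α^F` under `μ`. -/
def Microstates {Γ X : Type*} [Group Γ] [amb : MeasurableSpace X] [MulAction Γ X]
    (μ : Measure X) (F : Finset Γ) {m : ℕ} (A : Fin m → Set X) (δ : ℝ) {d : ℕ}
    (σ : Γ → Equiv.Perm (Fin d)) : Set (Fin d → Fin m) :=
  {c | ∑ j : F → Fin m,
      |((Finset.univ.filter fun k : Fin d => ∀ g : F, c (σ (g : Γ) k) = j g).card : ℝ) / d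
        - atomMass μ F A j| < δ}

/-- Sofic measure entropy of a p.m.p. action `Γ ↷ (X,μ)` with respect to the sofic
approximation `σ`, à la Bowen and Kerr–Li (via finite partitions): the supremum over
finite measurable partitions `B` of the infimum, over finite partitions `A` refining `B`
(with refining map `r`), finite `F ⊆ Γ` and `δ > 0`, of
`limsup_i (1/d_i) log #{r ∘ c : c a microstate for (A, F, δ, σ_i)}`. -/
noncomputable def soficMeasureEntropy {Γ X : Type*} [Group Γ] [amb : MeasurableSpace X]
    [MulAction Γ X] (d : ℕ → ℕ) (σ : ∀ i, Γ → Equiv.Perm (Fin (d i))) (μ : Measure X) :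
    EReal :=
  ⨆ (m' : ℕ) (B : Fin m' → Set X) (_ : IsPartition B ∧ ∀ k, MeasurableSet (B k)),
    ⨅ (m : ℕ) (A : Fin m → Set X) (r : Fin m → Fin m')
      (_ : (IsPartition A ∧ ∀ k, MeasurableSet (A k)) ∧
        ∀ k : Fin m', B k = ⋃ i ∈ {i : Fin m | r i = k}, A i)
      (F : Finset Γ) (δ : ℝ) (_ : 0 < δ),
      Filter.limsup
        (fun i => elogd (Nat.card ((fun c => r ∘ c) '' Microstates μ F A δ (σ i))) (d i)) atTop

/-! ### Counting labelings with few window patterns -/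

/-- Greedy covering: a family `R ⊆ T` each of whose sets contributes at least `t` new points on
average, and which is maximal, so that every other `E k` with `k ∈ T` has fewer than `t` points
outside its union. -/
lemma exists_greedy_cover {V : Type*} [Fintype V] (T : Finset V) (E : V → Finset V) (t : ℕ)
    (ht : 1 ≤ t) :
    ∃ R : Finset V, t * R.card ≤ (R.biUnion E).card ∧ R ⊆ T ∧
      ∀ k ∈ T, (E k \ R.biUnion E).card < t := by
  let Q : Finset (Finset V) :=
    Finset.univ.filter fun R => t * R.card ≤ (R.biUnion E).card ∧ R ⊆ T
  have hQ : Q.Nonempty := ⟨∅, by simp [Q]⟩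
  obtain ⟨R, hR, hmax⟩ := Q.exists_max_image Finset.card hQ
  simp only [Q, Finset.mem_filter, Finset.mem_univ, true_and] at hR hmax
  refine ⟨R, hR.1, hR.2, fun k hk => ?_⟩
  by_contra! hcon
  have hkR : k ∉ R := by
    intro h
    have : E k \ R.biUnion E = ∅ :=
      Finset.sdiff_eq_empty_iff_subset.2 (Finset.subset_biUnion_of_mem E h)
    rw [this] at hcon
    simp at hcon
    omega
  have := hmax (insert k R) ⟨by
    rw [Finset.card_insert_of_notMem hkR, Finset.biUnion_insert, ← Finset.sdiff_union_self_eq_union,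
      Finset.card_union_of_disjoint Finset.sdiff_disjoint]
    nlinarith [hR.1], Finset.insert_subset hk hR.2⟩
  rw [Finset.card_insert_of_notMem hkR] at this
  omega

/-- If all windows based outside `S` meet `U` in at most `t` points, then `U` is small. This is a double
count of the pairs `(i, k)` with `s i k ∈ U`; the base points in `S` and those whose window has
repeated points are bounded trivially. -/
lemma card_uncovered_le {I V : Type*} [Fintype I] [Fintype V] (s : I → Equiv.Perm V)
    (S U : Finset V) (t : ℕ)
    (hU : ∀ k, k ∉ S → (Finset.univ.image (fun i => s i k) ∩ U).card ≤ t) :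
    Fintype.card I * U.card ≤
      (S.card + (Finset.univ.filter fun k : V => ¬ Function.Injective fun i => s i k).card)
        * Fintype.card I + t * Fintype.card V := by
  set B := Finset.univ.filter fun k : V => ¬ Function.Injective fun i => s i k
  have h1 : Fintype.card I * U.card
      = ∑ k : V, (Finset.univ.filter fun i : I => s i k ∈ U).card := by
    simp_rw [Finset.card_filter]
    rw [Finset.sum_comm]
    have : ∀ i : I, ∑ k : V, (if s i k ∈ U then 1 else 0) = U.card := by
      intro i
      rw [Equiv.sum_comp (s i) (fun k => if k ∈ U then 1 else 0)]
      simp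
    simp [this]
  have h2 : ∀ k : V, (Finset.univ.filter fun i : I => s i k ∈ U).card
      ≤ (if k ∈ S then Fintype.card I else 0) + (if k ∈ B then Fintype.card I else 0) + t := by
    intro k
    have hle : (Finset.univ.filter fun i : I => s i k ∈ U).card ≤ Fintype.card I :=
      Finset.card_le_univ _
    by_cases hS : k ∈ S
    · rw [if_pos hS]; omega
    by_cases hB : k ∈ B
    · rw [if_pos hB]; omega
    have hinj : Function.Injective fun i => s i k := by simpa [B] using hB
    have := hU k hS
    have h3 : (Finset.univ.filter fun i : I => s i k ∈ U).card
        ≤ (Finset.univ.image (fun i => s i k) ∩ U).card := by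
      refine Finset.card_le_card_of_injOn (fun i => s i k) ?_ hinj.injOn
      intro i hi
      simp at hi ⊢
      exact hi
    omega
  rw [h1]
  refine (Finset.sum_le_sum fun k _ => h2 k).trans ?_
  simp [Finset.sum_add_distrib, mul_comm]
  ring_nf
  rfl

/-- Subsets of density at most `ε` number `exp (o(1) |V|)` as `ε → 0`. Each such `S` has
`η ^ |S| ≥ exp (- η |V|)`, while `∑ S, η ^ |S| = (1 + η) ^ |V|`. -/
lemma card_small_subsets_le {V : Type*} [Fintype V] (ε η : ℝ) (hη : 0 < η) (hη1 : η ≤ 1)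
    (h : -ε * Real.log η ≤ η) :
    ((Finset.univ.filter fun S : Finset V => (S.card : ℝ) ≤ ε * Fintype.card V).card : ℝ)
      ≤ Real.exp (2 * η * Fintype.card V) := by
  set D : ℝ := (Fintype.card V : ℝ)
  have hD : 0 ≤ D := by positivity
  have h1 : ∀ S ∈ (Finset.univ.filter fun S : Finset V => (S.card : ℝ) ≤ ε * D),
      (1 : ℝ) ≤ η ^ S.card * Real.exp (η * D) := by
    intro S hS
    simp only [Finset.mem_filter, Finset.mem_univ, true_and] at hS
    rw [← Real.rpow_natCast, Real.rpow_def_of_pos hη, ← Real.exp_add]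
    apply Real.one_le_exp
    have hl : Real.log η ≤ 0 := Real.log_nonpos hη.le hη1
    nlinarith [mul_le_mul_of_nonneg_right h hD]
  have h2 : ∑ S : Finset V, η ^ S.card = (1 + η) ^ Fintype.card V := by
    have := Finset.sum_pow_mul_eq_add_pow η 1 (Finset.univ : Finset V)
    simpa [add_comm] using this
  calc _ = ∑ S ∈ (Finset.univ.filter fun S : Finset V => (S.card : ℝ) ≤ ε * D), (1 : ℝ) := by simp
    _ ≤ ∑ S ∈ (Finset.univ.filter fun S : Finset V => (S.card : ℝ) ≤ ε * D),
        η ^ S.card * Real.exp (η * D) := Finset.sum_le_sum h1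
    _ ≤ ∑ S : Finset V, η ^ S.card * Real.exp (η * D) :=
        Finset.sum_le_sum_of_subset_of_nonneg (Finset.subset_univ _) fun _ _ _ => by positivity
    _ = (1 + η) ^ Fintype.card V * Real.exp (η * D) := by rw [← Finset.sum_mul, h2]
    _ ≤ Real.exp η ^ Fintype.card V * Real.exp (η * D) := by
        gcongr; linarith [Real.add_one_le_exp η]
    _ = Real.exp (2 * η * D) := by
        rw [← Real.exp_nat_mul, ← Real.exp_add]; congr 1; simp only [D]; ring

/-- A labeling whose set of exceptional points is exactly `S` is determined by its patterns on the windows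
based in `R`, taken from the lists `L`, and by its values off the union of these windows. -/
lemma card_labelings_fixed_bad_le {I V M : Type*} [Fintype I] [Fintype V] [Fintype M]
    (s : I → Equiv.Perm V)
    (L : V → Finset (I → M)) (N : ℕ) (hL : ∀ k, (L k).card ≤ N) (S R : Finset V)
    (hR : Disjoint R S) :
    (Finset.univ.filter fun b : V → M =>
        (Finset.univ.filter fun k => (fun i => b (s i k)) ∉ L k) = S).card ≤
      N ^ R.card * Fintype.card M ^
        (Finset.univ \ R.biUnion fun k => Finset.univ.image fun i => s i k).card := by
  set U := Finset.univ \ R.biUnion fun k => Finset.univ.image fun i => s i k with hUdef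
  let tgt := (R.pi fun k => L k) ×ˢ (Finset.univ : Finset (U → M))
  have hc : tgt.card ≤ N ^ R.card * Fintype.card M ^ U.card := by
    simp only [tgt, Finset.card_product, Finset.card_pi, Finset.card_univ, Fintype.card_fun,
      Fintype.card_coe]
    exact Nat.mul_le_mul_right _ (Finset.prod_le_pow_card _ _ _ fun k _ => hL k)
  refine le_trans ?_ hc
  refine Finset.card_le_card_of_injOn
    (fun b => (fun k _ => fun i => b (s i k), fun u => b u)) ?_ ?_
  · intro b hb
    simp only [Finset.coe_filter, Finset.mem_univ, true_and, Set.mem_ofPred_eq] at hb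
    simp only [tgt, Finset.coe_product, Set.mem_prod, Finset.mem_coe, Finset.mem_pi,
      Finset.mem_univ, and_true]
    intro k hk
    have : k ∉ S := Finset.disjoint_left.1 hR hk
    rw [← hb] at this
    simpa using this
  · intro b _ b' _ hbb
    simp only [Prod.mk.injEq] at hbb
    funext v
    by_cases hv : v ∈ U
    · exact congrFun hbb.2 ⟨v, hv⟩
    · simp only [hUdef, Finset.mem_sdiff, Finset.mem_univ, true_and, not_not,
        Finset.mem_biUnion, Finset.mem_image] at hv
      obtain ⟨k, hk, i, rfl⟩ := hv
      exact congrFun (congrFun (congrFun hbb.1 k) hk) i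

/-- Few labelings `b` have most of their window patterns in prescribed lists `L k` of at most `N`
elements. The set of exceptional points contributes a factor `exp (2 η |V|)`, the patterns on the
covering windows and the values on the uncovered points a factor `exp (η |V|)` each. -/
lemma card_labelings_le {I V M : Type*} [Fintype I] [Fintype V] [Fintype M] [Nonempty M]
    [Nonempty I]
    (s : I → Equiv.Perm V)
    (L : V → Finset (I → M)) (N t : ℕ) (hN : 1 ≤ N) (ht : 1 ≤ t) (hL : ∀ k, (L k).card ≤ N)
    (ε η : ℝ) (hη : 0 < η) (hη1 : η ≤ 1)
    (hεη : -ε * Real.log η ≤ η)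
    (hεM : 3 * ε * Real.log (Fintype.card M) ≤ η)
    (hNt : Real.log N ≤ η * t) (htI : (t : ℝ) ≤ ε * Fintype.card I)
    (hinj : ((Finset.univ.filter fun k : V => ¬ Function.Injective fun i => s i k).card : ℝ)
      ≤ ε * Fintype.card V) :
    ((Finset.univ.filter fun b : V → M =>
        ((Finset.univ.filter fun k => (fun i => b (s i k)) ∉ L k).card : ℝ)
          ≤ ε * Fintype.card V).card : ℝ) ≤ Real.exp (4 * η * Fintype.card V) := by
  set D : ℝ := (Fintype.card V : ℝ) with hD
  have hD0 : 0 ≤ D := by positivity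
  have hI : (0 : ℝ) < Fintype.card I := by exact_mod_cast Fintype.card_pos
  have hM : (1 : ℝ) ≤ Fintype.card M := by exact_mod_cast Fintype.card_pos
  set 𝒮 := Finset.univ.filter fun S : Finset V => (S.card : ℝ) ≤ ε * D
  set bad : (V → M) → Finset V := fun b =>
    Finset.univ.filter fun k => (fun i => b (s i k)) ∉ L k with hbad
  have hfib : ∀ S ∈ 𝒮, ((Finset.univ.filter fun b : V → M => bad b = S).card : ℝ)
      ≤ Real.exp (2 * η * D) := by
    intro S hS
    simp only [𝒮, Finset.mem_filter, Finset.mem_univ, true_and] at hS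
    obtain ⟨R, hR1, hR2, hR3⟩ := exists_greedy_cover (Finset.univ \ S)
      (fun k => Finset.univ.image fun i => s i k) t ht
    set C := R.biUnion fun k => Finset.univ.image fun i => s i k with hC
    have hcard := card_labelings_fixed_bad_le s L N hL S R
      (Finset.disjoint_of_subset_left hR2 Finset.sdiff_disjoint)
    rw [← hC] at hcard
    have hunc := card_uncovered_le s S (Finset.univ \ C) t (by
      intro k hk
      have := hR3 k (by simpa using hk)
      refine le_trans (Finset.card_le_card fun v hv => ?_) this.le
      simpa using hv)
    set U := Finset.univ \ C
    have hunc' : (Fintype.card I : ℝ) * U.card ≤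
      (S.card + (Finset.univ.filter fun k : V => ¬ Function.Injective fun i => s i k).card : ℝ)
        * Fintype.card I + t * Fintype.card V := by exact_mod_cast hunc
    have hUle : (U.card : ℝ) ≤ 3 * ε * D := by
      have h1 : (Fintype.card I : ℝ) * U.card ≤ Fintype.card I * (3 * ε * D) := by
        refine hunc'.trans ?_
        have h2 := mul_le_mul_of_nonneg_right (add_le_add hS hinj) hI.le
        have h3 := mul_le_mul_of_nonneg_right htI hD0
        nlinarith
      exact le_of_mul_le_mul_left h1 hI
    have hRle : (t : ℝ) * R.card ≤ D := by
      have : t * R.card ≤ Fintype.card V := hR1.trans (Finset.card_le_univ _)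
      rw [hD]
      exact_mod_cast this
    have e1 : (N : ℝ) ^ R.card ≤ Real.exp (η * D) := by
      have hN' : (0 : ℝ) < N := by exact_mod_cast hN
      rw [← Real.rpow_natCast, Real.rpow_def_of_pos hN']
      apply Real.exp_le_exp.2
      calc Real.log N * R.card ≤ η * t * R.card := by gcongr
        _ = η * (t * R.card) := by ring
        _ ≤ η * D := by gcongr
    have e2 : (Fintype.card M : ℝ) ^ U.card ≤ Real.exp (η * D) := by
      rw [← Real.rpow_natCast, Real.rpow_def_of_pos (by linarith)]
      apply Real.exp_le_exp.2
      calc Real.log (Fintype.card M) * U.card ≤ Real.log (Fintype.card M) * (3 * ε * D) := by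
            gcongr
        _ = (3 * ε * Real.log (Fintype.card M)) * D := by ring
        _ ≤ η * D := by gcongr
    calc ((Finset.univ.filter fun b : V → M => bad b = S).card : ℝ)
        ≤ (N : ℝ) ^ R.card * (Fintype.card M : ℝ) ^ U.card := by exact_mod_cast hcard
      _ ≤ Real.exp (η * D) * Real.exp (η * D) := by gcongr
      _ = Real.exp (2 * η * D) := by rw [← Real.exp_add]; ring_nf
  have hmap : ∀ b ∈ (Finset.univ.filter fun b : V → M => ((bad b).card : ℝ) ≤ ε * D),
      bad b ∈ 𝒮 := by
    intro b hb
    simpa [𝒮] using hb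
  rw [Finset.card_eq_sum_card_fiberwise hmap]
  push_cast
  calc _ ≤ ∑ S ∈ 𝒮, Real.exp (2 * η * D) := by
        refine Finset.sum_le_sum fun S hS => le_trans ?_ (hfib S hS)
        norm_cast
        exact Finset.card_le_card (Finset.filter_subset_filter _ (Finset.filter_subset _ _))
    _ = 𝒮.card * Real.exp (2 * η * D) := by simp
    _ ≤ Real.exp (2 * η * D) * Real.exp (2 * η * D) := by
        gcongr; exact card_small_subsets_le ε η hη hη1 hεη
    _ = Real.exp (4 * η * D) := by rw [← Real.exp_add]; ring_nf

/-! ### Names in the fibres of a finite-to-one map -/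

/-- For a countable collection of finite-valued functions `f j` on `X` there is one `N` such that, up to
probability `ε`, the value `f j x` lies in a list of at most `N` values depending measurably on `π x`.
The list at `y` consists of the values charged by the conditional measure on the fibre of `y`, so
its length is at most the cardinality of the fibre, which is finite almost surely. Conditional
measures are used because the set of all values taken on the fibre need not be measurable in `y`. -/
lemma exists_name_lists {X Y J : Type*} [MeasurableSpace X] [StandardBorelSpace X]
    [MeasurableSpace Y] [StandardBorelSpace Y] [Countable J]
    (μ : Measure X) [IsProbabilityMeasure μ] (π : X → Y) (hπ : Measurable π)
    (hfin : ∀ᵐ y ∂(μ.map π), (π ⁻¹' {y}).Finite)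
    {α : J → Type*} [∀ j, Fintype (α j)] (f : ∀ j, X → α j)
    (hf : ∀ j a, MeasurableSet (f j ⁻¹' {a})) (ε : ℝ) (hε : 0 < ε) :
    ∃ N : ℕ, 1 ≤ N ∧ ∀ j, ∃ L : Y → Finset (α j), (∀ l, MeasurableSet (L ⁻¹' {l})) ∧
      (∀ y, (L y).card ≤ N) ∧ μ.real {x | f j x ∉ L (π x)} ≤ ε := by
  have : Nonempty X := μ.nonempty_of_neZero
  have : IsProbabilityMeasure (μ.map π) := Measure.isProbabilityMeasure_map hπ.aemeasurable
  let κ := ProbabilityTheory.condDistrib (id : X → X) π μ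
  have hκ : (μ.map π).compProd κ = μ.map fun x => (π x, x) :=
    ProbabilityTheory.compProd_map_condDistrib aemeasurable_id
  have hgr : Measurable fun x => (π x, x) := hπ.prodMk measurable_id
  have hfibre : ∀ᵐ y ∂(μ.map π), ∀ᵐ x ∂(κ y), π x = y := by
    apply Measure.ae_ae_of_ae_compProd (p := fun z : Y × X => π z.2 = z.1)
    have hm : MeasurableSet {z : Y × X | π z.2 = z.1} :=
      measurableSet_eq_fun (hπ.comp measurable_snd) measurable_fst
    rw [hκ, ae_map_iff hgr.aemeasurable hm]
    simp
  let L₀ : ∀ j, Y → Finset (α j) := fun j y => Finset.univ.filter fun a => κ y (f j ⁻¹' {a}) ≠ 0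
  have hpos : ∀ j a, MeasurableSet {y | κ y (f j ⁻¹' {a}) = 0} := fun j a =>
    measurableSet_eq_fun (κ.measurable_coe (hf j a)) measurable_const
  have hL₀ : ∀ j (l : Finset (α j)), MeasurableSet (L₀ j ⁻¹' {l}) := by
    intro j l
    have : L₀ j ⁻¹' {l} = ⋂ a, {y | κ y (f j ⁻¹' {a}) = 0 ↔ a ∉ l} := by
      ext y
      simp only [L₀, Set.mem_preimage, Set.mem_singleton_iff, Finset.ext_iff, Finset.mem_filter,
        Finset.mem_univ, true_and, Set.mem_iInter, Set.mem_ofPred_eq]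
      exact forall_congr' fun a => by tauto
    rw [this]
    refine MeasurableSet.iInter fun a => ?_
    by_cases ha : a ∈ l
    · have h : {y | κ y (f j ⁻¹' {a}) = 0 ↔ a ∉ l} = {y | κ y (f j ⁻¹' {a}) = 0}ᶜ := by
        ext y; simp [ha]
      rw [h]
      exact (hpos j a).compl
    · simpa [ha] using hpos j a
  have hL₀p : ∀ j (P : Finset (α j) → Prop), MeasurableSet {y | P (L₀ j y)} := by
    intro j P
    have : {y | P (L₀ j y)} = ⋃ l ∈ {l | P l}, L₀ j ⁻¹' {l} := by
      ext y; simp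
    rw [this]
    exact MeasurableSet.biUnion (Set.to_countable _) fun l _ => hL₀ j l
  have hname : ∀ j, ∀ᵐ x ∂μ, f j x ∈ L₀ j (π x) := by
    intro j
    have hW : MeasurableSet {z : Y × X | f j z.2 ∈ L₀ j z.1} := by
      have : {z : Y × X | f j z.2 ∈ L₀ j z.1}
          = ⋃ a : α j, {y | a ∈ L₀ j y} ×ˢ (f j ⁻¹' {a}) := by
        ext z; simp
      rw [this]
      exact MeasurableSet.iUnion fun a => (hL₀p j (fun l => a ∈ l)).prod (hf j a)
    have h1 : ∀ᵐ z ∂((μ.map π).compProd κ), f j z.2 ∈ L₀ j z.1 := by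
      rw [Measure.ae_compProd_iff hW]
      refine Eventually.of_forall fun y => ?_
      have : ∀ a : α j, ∀ᵐ x ∂(κ y), a ∉ L₀ j y → f j x ≠ a := by
        intro a
        by_cases ha : a ∈ L₀ j y
        · simp [ha]
        · have h0 : κ y (f j ⁻¹' {a}) = 0 := by simpa [L₀] using ha
          rw [ae_iff]
          refine measure_mono_null (fun x hx => ?_) h0
          simpa [ha] using hx
      filter_upwards [ae_all_iff.2 this] with x hx
      by_contra h
      exact hx _ h rfl
    rw [hκ, ae_map_iff hgr.aemeasurable hW] at h1
    exact h1
  -- Each listed value is taken at some point of the fibre.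
  have hbdd : ∀ᵐ y ∂(μ.map π), ∃ n : ℕ, ∀ j, (L₀ j y).card ≤ n := by
    filter_upwards [hfin, hfibre] with y hy1 hy2
    refine ⟨hy1.toFinset.card, fun j => ?_⟩
    have hsub : L₀ j y ⊆ hy1.toFinset.image (f j) := by
      intro a ha
      have ha' : κ y (f j ⁻¹' {a}) ≠ 0 := by simpa [L₀] using ha
      have : ∃ᵐ x ∂(κ y), x ∈ f j ⁻¹' {a} := frequently_ae_mem_iff.2 ha'
      obtain ⟨x, hx1, hx2⟩ := (this.and_eventually hy2).exists
      simp only [Finset.mem_image, Set.Finite.mem_toFinset]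
      exact ⟨x, hx2, hx1⟩
    exact (Finset.card_le_card hsub).trans Finset.card_image_le
  -- `D n` is where some list is longer than `n`; it decreases to a null set.
  let D : ℕ → Set Y := fun n => {y | ∃ j, n < (L₀ j y).card}
  have hDm : ∀ n, MeasurableSet (D n) := by
    intro n
    have : D n = ⋃ j, {y | n < (L₀ j y).card} := by ext y; simp [D]
    rw [this]
    exact MeasurableSet.iUnion fun j => hL₀p j fun l => n < l.card
  have hanti : Antitone D := fun n m hnm y ⟨j, hj⟩ => ⟨j, lt_of_le_of_lt hnm hj⟩
  have hlim := tendsto_measure_iInter_atTop (μ := μ.map π)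
    (fun n => (hDm n).nullMeasurableSet) hanti ⟨0, measure_ne_top _ _⟩
  have hzero : (μ.map π) (⋂ n, D n) = 0 := by
    refine measure_mono_null ?_ (ae_iff.1 hbdd)
    intro y hy
    simpa [D] using hy
  rw [hzero] at hlim
  obtain ⟨n, hn1, hn2⟩ := ((hlim.eventually_le_const
    (ENNReal.ofReal_pos.2 hε)).and (eventually_ge_atTop 1)).exists
  refine ⟨n, hn2, fun j => ⟨fun y => if (L₀ j y).card ≤ n then L₀ j y else ∅, ?_, ?_, ?_⟩⟩
  · intro l
    exact hL₀p j fun l' => (if l'.card ≤ n then l' else ∅) = l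
  · intro y
    dsimp only
    split_ifs with h
    · exact h
    · simp
  · refine ENNReal.toReal_le_of_le_ofReal hε.le ?_
    refine le_trans ?_ hn1
    rw [Function.comp_apply, Measure.map_apply hπ (hDm n)]
    refine measure_mono_ae ?_
    filter_upwards [hname j] with x hx hx'
    by_contra h
    apply hx'
    have h' : (L₀ j (π x)).card ≤ n := by
      by_contra hc
      exact h ⟨j, not_le.1 hc⟩
    simpa [h'] using hx

/-! ### Coincidences in a sofic approximation -/

lemma tendsto_card_not_mul {Γ : Type*} [Group Γ] {d : ℕ → ℕ}
    {σ : ∀ i, Γ → Equiv.Perm (Fin (d i))} (hσ : IsSoficApprox d σ) (g h : Γ) :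
    Tendsto (fun i => ((Finset.univ.filter fun k : Fin (d i) =>
      ¬ σ i (g * h) k = σ i g (σ i h k)).card : ℝ) / d i) atTop (nhds 0) := by
  have h1 := (hσ.2.1 g h).const_sub 1
  rw [sub_self] at h1
  refine h1.congr' ?_
  filter_upwards [hσ.1.eventually_ge_atTop 1] with i hi
  have hd : (d i : ℝ) ≠ 0 := by positivity
  have := Finset.card_filter_add_card_filter_not (s := (Finset.univ : Finset (Fin (d i))))
    (fun k => σ i (g * h) k = σ i g (σ i h k))
  rw [Finset.card_univ, Fintype.card_fin] at this
  have h2 : ((Finset.univ.filter fun k : Fin (d i) => σ i (g * h) k = σ i g (σ i h k)).card : ℝ)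
    + (Finset.univ.filter fun k : Fin (d i) => ¬ σ i (g * h) k = σ i g (σ i h k)).card = d i := by
    exact_mod_cast this
  field_simp
  linarith

/-- If `σ g k = σ h k` and `σ` is multiplicative at `k` for a few pairs, then `g⁻¹ * h` fixes `k`. -/
lemma tendsto_card_coincidence {Γ : Type*} [Group Γ] {d : ℕ → ℕ}
    {σ : ∀ i, Γ → Equiv.Perm (Fin (d i))} (hσ : IsSoficApprox d σ) {g h : Γ} (hgh : g ≠ h) :
    Tendsto (fun i => ((Finset.univ.filter fun k : Fin (d i) => σ i g k = σ i h k).card : ℝ) / d i)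
      atTop (nhds 0) := by
  have hw : g⁻¹ * h ≠ 1 := fun e => hgh (inv_mul_eq_one.1 e)
  have hlim := (((tendsto_card_not_mul hσ g⁻¹ g).add (tendsto_card_not_mul hσ g⁻¹ h)).add
    (tendsto_card_not_mul hσ 1 1)).add (hσ.2.2 _ hw)
  simp only [add_zero] at hlim
  refine squeeze_zero (fun i => by positivity) (fun i => ?_) hlim
  rw [← add_div, ← add_div, ← add_div]
  gcongr
  norm_cast
  refine le_trans (Finset.card_le_card ?_) ((Finset.card_union_le _ _).trans
    (Nat.add_le_add_right ((Finset.card_union_le _ _).trans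
      (Nat.add_le_add_right (Finset.card_union_le _ _) _)) _))
  intro k hk
  simp only [Finset.mem_filter, Finset.mem_univ, true_and] at hk
  simp only [Finset.mem_union, Finset.mem_filter, Finset.mem_univ, true_and]
  by_contra! hcon
  obtain ⟨⟨⟨h1, h2⟩, h3⟩, h4⟩ := hcon
  -- `σ 1 = σ 1 ∘ σ 1` at `k` forces `σ 1 k = k`, so `g⁻¹ * h` would fix `k`.
  rw [one_mul] at h3
  rw [inv_mul_cancel] at h1
  have h5 : k = σ i 1 k := (σ i 1).injective h3
  apply h4
  rw [h2, ← hk, ← h1, ← h5]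

lemma eventually_card_not_injective_le {Γ : Type*} [Group Γ] {d : ℕ → ℕ}
    {σ : ∀ i, Γ → Equiv.Perm (Fin (d i))} (hσ : IsSoficApprox d σ) (F : Finset Γ)
    (ε : ℝ) (hε : 0 < ε) :
    ∀ᶠ i in atTop, ((Finset.univ.filter fun k : Fin (d i) =>
      ¬ Function.Injective fun g : F => σ i (g : Γ) k).card : ℝ) ≤ ε * d i := by
  have hlim : Tendsto (fun i => ∑ p ∈ (Finset.univ : Finset (F × F)).filter (fun p => p.1 ≠ p.2),
      ((Finset.univ.filter fun k : Fin (d i) => σ i (p.1 : Γ) k = σ i (p.2 : Γ) k).card : ℝ) / d i)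
      atTop (nhds 0) := by
    rw [← Finset.sum_const_zero (s := (Finset.univ : Finset (F × F)).filter fun p => p.1 ≠ p.2)]
    refine tendsto_finsetSum _ fun p hp => ?_
    refine tendsto_card_coincidence hσ fun e => ?_
    exact (Finset.mem_filter.1 hp).2 (Subtype.ext e)
  filter_upwards [hlim.eventually_le_const hε, hσ.1.eventually_ge_atTop 1] with i hi hd
  have hd' : (0 : ℝ) < d i := by positivity
  rw [← Finset.sum_div, div_le_iff₀ hd'] at hi
  refine le_trans ?_ hi
  norm_cast
  refine le_trans (Finset.card_le_card ?_) Finset.card_biUnion_le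
  intro k hk
  have hk' := (Finset.mem_filter.1 hk).2
  simp only [Function.Injective] at hk'
  push Not at hk'
  obtain ⟨a, b, hab, hne⟩ := hk'
  simp only [Finset.mem_biUnion, Finset.mem_filter, Finset.mem_univ, true_and]
  exact ⟨(a, b), hne, hab⟩

/-! ### Pattern statistics of microstates -/

lemma IsPartition.exists_label {X ι : Type*} {A : ι → Set X} (hA : IsPartition A) :
    ∃ l : X → ι, ∀ x i, x ∈ A i ↔ l x = i := by
  choose l h1 h2 using hA
  exact ⟨l, fun x i => ⟨fun h => (h2 x i h).symm, fun h => h ▸ h1 x⟩⟩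

lemma card_filter_pattern {Γ : Type*} {m d : ℕ} (σ : Γ → Equiv.Perm (Fin d)) (F : Finset Γ)
    (c : Fin d → Fin m) (P : Finset (F → Fin m)) :
    ((Finset.univ.filter fun k : Fin d => (fun g : F => c (σ (g : Γ) k)) ∈ P).card : ℝ)
      = ∑ j ∈ P, ((Finset.univ.filter fun k : Fin d => ∀ g : F, c (σ (g : Γ) k) = j g).card : ℝ) := by
  have hm : ∀ k ∈ (Finset.univ.filter fun k : Fin d => (fun g : F => c (σ (g : Γ) k)) ∈ P),
      (fun g : F => c (σ (g : Γ) k)) ∈ P := by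
    intro k hk
    simpa using hk
  rw [Finset.card_eq_sum_card_fiberwise hm]
  push_cast
  refine Finset.sum_congr rfl fun j hj => ?_
  congr 2
  ext k
  simp only [Finset.mem_filter, Finset.mem_univ, true_and, funext_iff]
  constructor
  · exact fun h => h.2
  · intro h
    refine ⟨?_, h⟩
    rwa [show (fun g : F => c (σ (g : Γ) k)) = j from funext h]

lemma measurableSet_pattern {Γ X : Type*} [Group Γ] [MeasurableSpace X] [MulAction Γ X]
    (hact : ∀ g : Γ, Measurable fun x : X => g • x) (F : Finset Γ) {m : ℕ} {A : Fin m → Set X}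
    (hA : ∀ k, MeasurableSet (A k)) {l : X → Fin m} (hl : ∀ x i, x ∈ A i ↔ l x = i)
    (j : F → Fin m) : MeasurableSet ((fun x => fun g : F => l ((g : Γ) • x)) ⁻¹' {j}) := by
  have : (fun x => fun g : F => l ((g : Γ) • x)) ⁻¹' {j}
      = ⋂ g : F, (fun x => (g : Γ) • x) ⁻¹' A (j g) := by
    ext x
    simp [funext_iff, hl]
  rw [this]
  exact MeasurableSet.iInter fun g => hact g (hA _)

lemma atomMass_eq {Γ X : Type*} [Group Γ] [MeasurableSpace X] [MulAction Γ X]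
    (μ : Measure X) (F : Finset Γ) {m : ℕ} {A : Fin m → Set X}
    {l : X → Fin m} (hl : ∀ x i, x ∈ A i ↔ l x = i) (j : F → Fin m) :
    atomMass μ F A j = μ.real ((fun x => fun g : F => l ((g : Γ) • x)) ⁻¹' {j}) := by
  unfold atomMass Measure.real
  congr 2
  ext x
  simp [funext_iff, hl]

lemma sum_atomMass {Γ X : Type*} [Group Γ] [MeasurableSpace X] [MulAction Γ X]
    (μ : Measure X) [IsProbabilityMeasure μ]
    (hact : ∀ g : Γ, Measurable fun x : X => g • x) (F : Finset Γ) {m : ℕ} {A : Fin m → Set X}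
    (hA : ∀ k, MeasurableSet (A k)) {l : X → Fin m} (hl : ∀ x i, x ∈ A i ↔ l x = i)
    (P : Finset (F → Fin m)) :
    ∑ j ∈ P, atomMass μ F A j = μ.real {x | (fun g : F => l ((g : Γ) • x)) ∈ P} := by
  simp_rw [atomMass_eq μ F hl]
  exact sum_measureReal_preimage_singleton P fun j _ => measurableSet_pattern hact F hA hl j

/-- The empirical frequency of any set `P` of `F`-patterns in a microstate exceeds the probability of `P`
by at most `δ`. -/
lemma Microstates.card_pattern_le {Γ X : Type*} [Group Γ] [MeasurableSpace X] [MulAction Γ X]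
    (μ : Measure X) [IsProbabilityMeasure μ]
    (hact : ∀ g : Γ, Measurable fun x : X => g • x) (F : Finset Γ) {m : ℕ} {A : Fin m → Set X}
    (hA : ∀ k, MeasurableSet (A k)) {l : X → Fin m} (hl : ∀ x i, x ∈ A i ↔ l x = i)
    {δ : ℝ} {d : ℕ} (σ : Γ → Equiv.Perm (Fin d)) {c : Fin d → Fin m}
    (hc : c ∈ Microstates μ F A δ σ) (P : Finset (F → Fin m)) :
    ((Finset.univ.filter fun k : Fin d => (fun g : F => c (σ (g : Γ) k)) ∈ P).card : ℝ) / d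
      ≤ μ.real {x | (fun g : F => l ((g : Γ) • x)) ∈ P} + δ := by
  rw [card_filter_pattern, ← sum_atomMass μ hact F hA hl, Finset.sum_div, ← sub_le_iff_le_add',
    ← Finset.sum_sub_distrib]
  refine le_trans (Finset.sum_le_sum fun j _ => le_abs_self _) ?_
  exact (Finset.sum_le_univ_sum_of_nonneg fun j => abs_nonneg _).trans (le_of_lt hc)

/-- Microstates for a partition of `X` refining the lift of a partition `A'` of `Y` project to
microstates for `A'`, since total variation distance decreases under the projection of patterns. -/
lemma Microstates.comp_mem {Γ X Y : Type*} [Group Γ] [MeasurableSpace X] [MulAction Γ X]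
    [MeasurableSpace Y] [MulAction Γ Y]
    (μ : Measure X) [IsProbabilityMeasure μ] (ν : Measure Y)
    (hactX : ∀ g : Γ, Measurable fun x : X => g • x)
    (hactY : ∀ g : Γ, Measurable fun y : Y => g • y)
    (π : X → Y) (hπ : Measurable π) (hν : Measure.map π μ = ν)
    (hπeq : ∀ (g : Γ) (x : X), π (g • x) = g • π x)
    {F F' : Finset Γ} (hF : F' ⊆ F) {m m' : ℕ} {A : Fin m → Set X} {A' : Fin m' → Set Y}
    (hA : ∀ k, MeasurableSet (A k)) (hA' : ∀ k, MeasurableSet (A' k))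
    {l : X → Fin m} (hl : ∀ x i, x ∈ A i ↔ l x = i)
    {l' : Y → Fin m'} (hl' : ∀ x i, x ∈ A' i ↔ l' x = i)
    (p : Fin m → Fin m') (hp : ∀ x, l' (π x) = p (l x))
    {δ δ' : ℝ} (hδ : δ ≤ δ') {d : ℕ} (σ : Γ → Equiv.Perm (Fin d)) {c : Fin d → Fin m}
    (hc : c ∈ Microstates μ F A δ σ) : p ∘ c ∈ Microstates ν F' A' δ' σ := by
  let ρ : (F → Fin m) → (F' → Fin m') := fun j g => p (j ⟨g, hF g.2⟩)
  have h1 : ∀ j' : F' → Fin m', atomMass ν F' A' j'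
      = ∑ j ∈ Finset.univ.filter (fun j => ρ j = j'), atomMass μ F A j := by
    intro j'
    rw [sum_atomMass μ hactX F hA hl, atomMass_eq ν F' hl', ← hν,
      map_measureReal_apply hπ (measurableSet_pattern hactY F' hA' hl' j')]
    congr 1
    ext x
    simp [ρ, funext_iff, ← hπeq, hp]
  have h2 : ∀ j' : F' → Fin m',
      ((Finset.univ.filter fun k : Fin d => ∀ g : F', (p ∘ c) (σ (g : Γ) k) = j' g).card : ℝ)
      = ∑ j ∈ Finset.univ.filter (fun j => ρ j = j'),
        ((Finset.univ.filter fun k : Fin d => ∀ g : F, c (σ (g : Γ) k) = j g).card : ℝ) := by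
    intro j'
    rw [← card_filter_pattern]
    congr 2
    ext k
    simp [ρ, funext_iff]
  refine lt_of_le_of_lt ?_ (lt_of_lt_of_le hc hδ)
  calc _ ≤ ∑ j' : F' → Fin m', ∑ j ∈ Finset.univ.filter (fun j => ρ j = j'),
      |((Finset.univ.filter fun k : Fin d => ∀ g : F, c (σ (g : Γ) k) = j g).card : ℝ) / d
        - atomMass μ F A j| := by
        refine Finset.sum_le_sum fun j' _ => ?_
        rw [h1, h2, Finset.sum_div, ← Finset.sum_sub_distrib]
        exact Finset.abs_sum_le_sum_abs _ _
    _ = _ := Finset.sum_fiberwise _ _ _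

/-! ### Exponential growth rates -/

/-- The factor `4` matches the exponent `4 * η` of `card_labelings_le`. -/
lemma EReal.le_of_forall_small {a b : EReal}
    (h : ∀ η : ℝ, 0 < η → η ≤ 1 → a ≤ b + ((4 * η : ℝ) : EReal)) : a ≤ b := by
  induction b with
  | bot => simpa using h 1 one_pos le_rfl
  | top => exact le_top
  | coe b =>
    refine EReal.le_of_forall_lt_iff_le.1 fun z hz => ?_
    have hz' : b < z := EReal.coe_lt_coe_iff.1 hz
    have hη : 0 < min 1 ((z - b) / 4) := lt_min one_pos (by linarith)
    refine (h _ hη (min_le_left _ _)).trans ?_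
    rw [← EReal.coe_add, EReal.coe_le_coe_iff]
    linarith [min_le_right 1 ((z - b) / 4)]

lemma elogd_le_add {n n' d : ℕ} (hd : 1 ≤ d) {a : ℝ} (h : (n : ℝ) ≤ n' * Real.exp (a * d)) :
    elogd n d ≤ elogd n' d + (a : EReal) := by
  unfold elogd
  by_cases hn : n = 0
  · simp [hn]
  have hn0 : (0 : ℝ) < n := by positivity
  by_cases hn' : n' = 0
  · rw [hn'] at h
    simp at h
    omega
  have hn'0 : (0 : ℝ) < n' := by positivity
  have hd0 : (0 : ℝ) < d := by positivity
  rw [if_neg hn, if_neg hn', ← EReal.coe_add, EReal.coe_le_coe_iff]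
  have := Real.log_le_log hn0 h
  rw [Real.log_mul hn'0.ne' (Real.exp_pos _).ne', Real.log_exp] at this
  rw [div_add' _ _ _ hd0.ne']
  gcongr

lemma limsup_elogd_le_add {u v : ℕ → ℕ} {d : ℕ → ℕ} (hd : Tendsto d atTop atTop) {a : ℝ}
    (h : ∀ᶠ i in atTop, (u i : ℝ) ≤ v i * Real.exp (a * d i)) :
    limsup (fun i => elogd (u i) (d i)) atTop
      ≤ limsup (fun i => elogd (v i) (d i)) atTop + (a : EReal) := by
  have h1 : limsup (fun i => elogd (u i) (d i)) atTop
      ≤ limsup ((fun i => elogd (v i) (d i)) + fun _ => (a : EReal)) atTop := by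
    refine limsup_le_limsup ?_
    filter_upwards [h, hd.eventually_ge_atTop 1] with i hi hdi
    exact elogd_le_add hdi hi
  refine h1.trans ((EReal.limsup_add_le ?_ ?_).trans ?_)
  · right; simp
  · right; simp
  · simp

/-! ### Comparison of microstates -/

lemma exists_parameters (M : ℝ) (η : ℝ) (hη : 0 < η) :
    ∃ ε : ℝ, 0 < ε ∧ -(2 * ε) * Real.log η ≤ η ∧ 3 * (2 * ε) * Real.log M ≤ η := by
  set K := 1 + |Real.log η| + |Real.log M|
  have hK : 0 < K := by positivity
  refine ⟨η / (6 * K), by positivity, ?_, ?_⟩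
  · have h1 : -Real.log η ≤ K := by
      have := neg_le_abs (Real.log η); have := abs_nonneg (Real.log M); simp only [K]; linarith
    calc -(2 * (η / (6 * K))) * Real.log η = 2 * (η / (6 * K)) * (-Real.log η) := by ring
      _ ≤ 2 * (η / (6 * K)) * K := by gcongr
      _ = η / 3 := by field_simp; ring
      _ ≤ η := by linarith
  · have h1 : Real.log M ≤ K := by
      have := le_abs_self (Real.log M); have := abs_nonneg (Real.log η); simp only [K]; linarith
    calc 3 * (2 * (η / (6 * K))) * Real.log M ≤ 3 * (2 * (η / (6 * K))) * K := by gcongr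
      _ = η := by field_simp; ring

/-- If at most `K` labelings are compatible with any choice of lists, then the `B`-labelings (through `r`)
of microstates for `X` are at most `K` times as many as the images under `r'` of microstates for `Y`.
The list at `k` is read off at `σ 1 k`, so nothing need be known about `σ 1`. -/
lemma card_image_microstates_le {Γ X Y : Type*} [Group Γ]
    [MeasurableSpace X] [MeasurableSpace Y] [MulAction Γ X] [MulAction Γ Y]
    (μ : Measure X) [IsProbabilityMeasure μ] (ν : Measure Y)
    (hactX : ∀ g : Γ, Measurable fun x : X => g • x)
    (hactY : ∀ g : Γ, Measurable fun y : Y => g • y)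
    (π : X → Y) (hπ : Measurable π) (hν : Measure.map π μ = ν)
    (hπeq : ∀ (g : Γ) (x : X), π (g • x) = g • π x)
    {m m₁ m₂ n : ℕ} (F₀ F F' : Finset Γ) (hF₀ : F₀ ⊆ F) (hF' : F' ⊆ F) (h1F : 1 ∈ F)
    (A : Fin m → Set X) (A' : Fin m₂ → Set Y)
    (hA : ∀ k, MeasurableSet (A k)) (hA' : ∀ k, MeasurableSet (A' k))
    (l : X → Fin m) (hl : ∀ x i, x ∈ A i ↔ l x = i)
    (l' : Y → Fin m₂) (hl' : ∀ x i, x ∈ A' i ↔ l' x = i)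
    (r : Fin m → Fin m₁) (p : Fin m → Fin m₂) (hp : ∀ x, l' (π x) = p (l x))
    (r' : Fin m₂ → Fin n) (list : Fin n → Finset (F₀ → Fin m₁))
    (ε δ δ' : ℝ) (hδ : δ ≤ δ') (hδε : δ ≤ ε)
    (hlist : μ.real {x | (fun g : F₀ => r (l ((g : Γ) • x))) ∉ list (r' (l' (π x)))} ≤ ε)
    {d : ℕ} (hd : 1 ≤ d) (σ : Γ → Equiv.Perm (Fin d)) (K : ℝ)
    (hcount : ∀ L : Fin d → Finset (F₀ → Fin m₁), (∀ k, ∃ i, L k = list i) →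
      ((Finset.univ.filter fun b : Fin d → Fin m₁ =>
        ((Finset.univ.filter fun k => (fun g : F₀ => b (σ (g : Γ) k)) ∉ L k).card : ℝ)
          ≤ 2 * ε * d).card : ℝ) ≤ K) :
    (Nat.card ((fun c => r ∘ c) '' Microstates μ F A δ σ) : ℝ)
      ≤ Nat.card ((fun c => r' ∘ c) '' Microstates ν F' A' δ' σ) * K := by
  set Im' := (fun c => r' ∘ c) '' Microstates ν F' A' δ' σ
  let G : (Fin d → Fin n) → Finset (Fin d → Fin m₁) := fun q =>
    Finset.univ.filter fun b : Fin d → Fin m₁ =>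
        ((Finset.univ.filter fun k => (fun g : F₀ => b (σ (g : Γ) k)) ∉ list (q (σ 1 k))).card : ℝ)
          ≤ 2 * ε * d
  have hsub : (fun c => r ∘ c) '' Microstates μ F A δ σ
      ⊆ ((Set.toFinset Im').biUnion G : Finset (Fin d → Fin m₁)) := by
    rintro _ ⟨c, hc, rfl⟩
    simp only [Finset.coe_biUnion, Set.mem_iUnion, Finset.mem_coe, Set.mem_toFinset]
    refine ⟨r' ∘ p ∘ c, ⟨p ∘ c, Microstates.comp_mem μ ν hactX hactY π hπ hν hπeq hF' hA hA' hl hl'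
      p hp hδ σ hc, rfl⟩, ?_⟩
    let P : Finset (F → Fin m) := Finset.univ.filter fun j =>
      (fun g : F₀ => r (j ⟨g, hF₀ g.2⟩)) ∉ list (r' (p (j ⟨1, h1F⟩)))
    have h := Microstates.card_pattern_le μ hactX F hA hl σ hc P
    have hd0 : (0 : ℝ) < d := by positivity
    rw [div_le_iff₀ hd0] at h
    have hP : {x | (fun g : F => l ((g : Γ) • x)) ∈ P}
        = {x | (fun g : F₀ => r (l ((g : Γ) • x))) ∉ list (r' (l' (π x)))} := by
      ext x
      simp [P, hp]
    rw [hP] at h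
    simp only [G, Finset.mem_filter, Finset.mem_univ, true_and]
    simp only [P, Finset.mem_filter, Finset.mem_univ, true_and] at h
    refine h.trans ?_
    gcongr
    linarith
  have h1 : Nat.card ((fun c => r ∘ c) '' Microstates μ F A δ σ)
      ≤ ((Set.toFinset Im').biUnion G).card := by
    rw [Nat.card_coe_set_eq, ← Set.ncard_coe_finset]
    exact Set.ncard_le_ncard hsub (Finset.finite_toSet _)
  have h2 : Nat.card Im' = (Set.toFinset Im').card := by
    rw [Nat.card_coe_set_eq, Set.ncard_eq_toFinset_card']
  rw [h2]
  calc _ ≤ (((Set.toFinset Im').biUnion G).card : ℝ) := by exact_mod_cast h1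
    _ ≤ ∑ q ∈ Set.toFinset Im', ((G q).card : ℝ) := by exact_mod_cast Finset.card_biUnion_le
    _ ≤ ∑ q ∈ Set.toFinset Im', K := Finset.sum_le_sum fun q _ =>
        hcount (fun k => list (q (σ 1 k))) fun k => ⟨_, rfl⟩
    _ = _ := by simp

/-- **Finite-to-one extensions do not increase sofic measure entropy.**
Let `Γ` be a countably infinite sofic group with sofic approximation `Σ = (σ_i)`, and let
`π : X → Y` be a finite-to-one measurable factor map between p.m.p. actions `Γ ↷ (X,μ)`
and `Γ ↷ (Y,ν)`.  Then `h^Σ_Γ(X,μ) ≤ h^Σ_Γ(Y,ν)`. -/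
theorem finite_to_one_sofic_entropy_le
    {Γ X Y : Type*} [Group Γ] [Countable Γ] [Infinite Γ]
    [mX : MeasurableSpace X] [StandardBorelSpace X]
    [mY : MeasurableSpace Y] [StandardBorelSpace Y]
    [MulAction Γ X] [MulAction Γ Y]
    (d : ℕ → ℕ) (σ : ∀ i, Γ → Equiv.Perm (Fin (d i))) (hσ : IsSoficApprox d σ)
    (μ : Measure X) [IsProbabilityMeasure μ] (ν : Measure Y)
    (hmeasX : ∀ g : Γ, Measurable fun x : X => g • x)
    (hmpX : ∀ g : Γ, Measure.map (fun x : X => g • x) μ = μ)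
    (hmeasY : ∀ g : Γ, Measurable fun y : Y => g • y)
    (hmpY : ∀ g : Γ, Measure.map (fun y : Y => g • y) ν = ν)
    (π : X → Y) (hπmeas : Measurable π) (hπmp : Measure.map π μ = ν)
    (hπeq : ∀ (g : Γ) (x : X), π (g • x) = g • π x)
    (hfin : ∀ᵐ y ∂ν, (π ⁻¹' {y}).Finite) :
    soficMeasureEntropy d σ μ ≤ soficMeasureEntropy d σ ν := by
  unfold soficMeasureEntropy
  refine iSup_le fun m₁ => iSup_le fun B => iSup_le fun ⟨hBp, hBm⟩ => ?_
  refine EReal.le_of_forall_small fun η hη hη1 => ?_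
  obtain ⟨lB, hlB⟩ := hBp.exists_label
  have : Nonempty X := μ.nonempty_of_neZero
  have : Nonempty (Fin m₁) := ⟨lB (Classical.arbitrary X)⟩
  obtain ⟨ε, hε, hε1, hε2⟩ := exists_parameters (Fintype.card (Fin m₁)) η hη
  -- `N` bounds the number of names in a fibre for every window at once; only afterwards is the
  -- window `F₀` chosen, so large that `log N` per window is negligible.
  obtain ⟨N, hN, hlists⟩ := exists_name_lists μ π hπmeas (hπmp ▸ hfin)
    (fun (F : Finset Γ) x => fun g : F => lB ((g : Γ) • x))
    (fun F a => measurableSet_pattern hmeasX F hBm hlB a) ε hε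
  obtain ⟨t, ht⟩ := exists_nat_ge (max 1 (Real.log N / η))
  have ht1 : 1 ≤ t := by exact_mod_cast (le_max_left _ _).trans ht
  have ht2 : Real.log N ≤ η * t := by
    have := (le_max_right _ _).trans ht
    rw [div_le_iff₀ hη] at this
    linarith
  obtain ⟨w, hw⟩ := exists_nat_ge (max 1 (t / (2 * ε)))
  obtain ⟨F₀, hF₀⟩ := Infinite.exists_subset_card_eq Γ w
  have hw1 : 1 ≤ w := by exact_mod_cast (le_max_left _ _).trans hw
  have hw2 : (t : ℝ) ≤ 2 * ε * w := by
    have := (le_max_right _ _).trans hw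
    rw [div_le_iff₀ (by positivity)] at this
    linarith
  have hF₀ne : Nonempty F₀ := by
    have : F₀.Nonempty := Finset.card_pos.1 (by omega)
    exact this.to_subtype
  obtain ⟨L, hLm, hLN, hLμ⟩ := hlists F₀
  -- The partition of `Y` according to the value of the list `L`.
  let e := Fintype.equivFin (Finset (F₀ → Fin m₁))
  let B' : Fin (Fintype.card (Finset (F₀ → Fin m₁))) → Set Y := fun i => L ⁻¹' {e.symm i}
  have hB'p : IsPartition B' := by
    intro y
    refine ⟨e (L y), by simp [B'], fun i hi => ?_⟩
    have hi' : L y = e.symm i := hi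
    simp [hi']
  have hB'm : ∀ k, MeasurableSet (B' k) := fun k => hLm _
  rw [← EReal.sub_le_iff_le_add (Or.inl (EReal.coe_ne_bot _)) (Or.inl (EReal.coe_ne_top _))]
  refine le_iSup_of_le _ (le_iSup_of_le B' (le_iSup_of_le ⟨hB'p, hB'm⟩ ?_))
  refine le_iInf fun m₂ => le_iInf fun A' => le_iInf fun r' => le_iInf fun ⟨⟨hA'p, hA'm⟩, hA'r⟩ =>
    le_iInf fun F' => le_iInf fun δ' => le_iInf fun hδ' => ?_
  rw [EReal.sub_le_iff_le_add (Or.inl (EReal.coe_ne_bot _)) (Or.inl (EReal.coe_ne_top _))]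
  obtain ⟨l', hl'⟩ := hA'p.exists_label
  have hlr : ∀ y, L y = e.symm (r' (l' y)) := by
    intro y
    have : y ∈ B' (r' (l' y)) := by
      rw [hA'r]
      simp [hl']
    exact this
  -- Indices of empty pieces of `B'` may carry lists longer than `N`; these are discarded.
  let list : Fin (Fintype.card (Finset (F₀ → Fin m₁))) → Finset (F₀ → Fin m₁) := fun i =>
    if (e.symm i).card ≤ N then e.symm i else ∅
  have hlistN : ∀ i, (list i).card ≤ N := by
    intro i
    simp only [list]
    split_ifs with h
    · exact h
    · simp
  have hlistL : ∀ y, list (r' (l' y)) = L y := by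
    intro y
    simp only [list]
    rw [← hlr, if_pos (hLN y)]
  -- The join of `B` with the lift of `A'`.
  let E : Fin m₁ × Fin m₂ ≃ Fin (m₁ * m₂) := finProdFinEquiv
  let A : Fin (m₁ * m₂) → Set X := fun k => B (E.symm k).1 ∩ π ⁻¹' A' (E.symm k).2
  let l : X → Fin (m₁ * m₂) := fun x => E (lB x, l' (π x))
  have hl : ∀ x i, x ∈ A i ↔ l x = i := by
    intro x i
    rw [← Equiv.eq_symm_apply]
    simp [A, hlB, hl', Prod.ext_iff]
  have hAp : IsPartition A := fun x => ⟨l x, (hl x _).2 rfl, fun i hi => ((hl x i).1 hi).symm⟩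
  have hAm : ∀ k, MeasurableSet (A k) := fun k => (hBm _).inter (hπmeas (hA'm _))
  let r : Fin (m₁ * m₂) → Fin m₁ := fun k => (E.symm k).1
  let p : Fin (m₁ * m₂) → Fin m₂ := fun k => (E.symm k).2
  have hr : ∀ k, B k = ⋃ i ∈ {i | r i = k}, A i := by
    intro k
    ext x
    simp [hlB, hl, r, l]
  refine iInf_le_of_le (m₁ * m₂) (iInf_le_of_le A (iInf_le_of_le r (iInf_le_of_le ⟨⟨hAp, hAm⟩, hr⟩
    (iInf_le_of_le (insert 1 (F₀ ∪ F')) (iInf_le_of_le (min δ' ε)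
      (iInf_le_of_le (lt_min hδ' hε) ?_))))))
  refine limsup_elogd_le_add hσ.1 ?_
  filter_upwards [hσ.1.eventually_ge_atTop 1,
    eventually_card_not_injective_le hσ F₀ (2 * ε) (by positivity)] with i hdi hinj
  refine card_image_microstates_le μ ν hmeasX hmeasY π hπmeas hπmp hπeq F₀ _ F'
    (fun g hg => by simp [hg]) (fun g hg => by simp [hg]) (by simp) A A' hAm hA'm l hl l' hl'
    r p (by simp [p, l]) r' list ε _ δ' (min_le_left _ _) (min_le_right _ _)
    ?_ hdi (σ i) _ ?_
  · simpa [r, l, hlistL] using hLμ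
  · intro L' hL'
    have hcount := card_labelings_le (fun g : F₀ => σ i (g : Γ)) L' N t hN ht1
      (fun k => by obtain ⟨a, ha⟩ := hL' k; rw [ha]; exact hlistN a)
      (2 * ε) η hη hη1 hε1 hε2 ht2 (by simpa [hF₀] using hw2) (by rw [Fintype.card_fin]; convert hinj)
    simp only [Fintype.card_fin] at hcount
    convert hcount
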